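/- arXiv:2405.00294 — 2 statements merged into one kernel-verified Lean document; each statement's English description precedes it below -/
import Mathlib

section
/- Let F and G be cumulative distribution functions on ℝ (nondecreasing, right-continuous, with limit 0 at −∞ and 1 at +∞), and define their quantile functions by F⁻¹(u) = inf{x ∈ ℝ : F(x) ≥ u} and G⁻¹(u) = inf{x ∈ ℝ : G(x) ≥ u} for u ∈ (0,1). Then ∫₀¹ |F⁻¹(u) − G⁻¹(u)| du = ∫_ℝ |F(x) − G(x)| dx, as an equality in [0,∞]. -/
/-!
Both integrals are the planar Lebesgue measure of the region between the graphs of `F` and `G`,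
`{(u, x) | 0 < u ≤ 1, min (F x) (G x) < u ≤ max (F x) (G x)}`, computed by slicing in the two
possible directions (Tonelli). The slice at height `x` is the interval `Ι (F x) (G x)`, of length
`|F x - G x|`. By the Galois connection `F⁻¹(u) ≤ x ↔ u ≤ F x` for `0 < u < 1`
(`quantileFn_le_iff`), the slice at `u` is the half-open interval between `F⁻¹(u)` and `G⁻¹(u)`,
of length `|F⁻¹(u) - G⁻¹(u)|`.
-/

open Filter Set MeasureTheory

/-- The quantile function (generalized inverse) of a CDF:
`F⁻¹(u) = inf {x : ℝ | F x ≥ u}`. -/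
noncomputable def quantileFn (F : ℝ → ℝ) (u : ℝ) : ℝ := sInf {x : ℝ | u ≤ F x}

/-- The Galois connection between a distribution function and its quantile function.
Right-continuity of `F` is what makes the infimum defining `quantileFn F u` attained. -/
lemma quantileFn_le_iff {F : ℝ → ℝ} (hmono : Monotone F)
    (hrc : ∀ x, ContinuousWithinAt F (Ici x) x)
    (h0 : Tendsto F atBot (nhds 0)) (h1 : Tendsto F atTop (nhds 1))
    {u : ℝ} (hu : u ∈ Ioo (0 : ℝ) 1) (x : ℝ) : quantileFn F u ≤ x ↔ u ≤ F x := by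
  have hne : {y : ℝ | u ≤ F y}.Nonempty := by
    obtain ⟨y, hy⟩ := (h1.eventually (lt_mem_nhds hu.2)).exists
    exact ⟨y, le_of_lt hy⟩
  have hbdd : BddBelow {y : ℝ | u ≤ F y} := by
    obtain ⟨a, ha⟩ := (h0.eventually (gt_mem_nhds hu.1)).exists
    refine ⟨a, fun y hy => ?_⟩
    by_contra! hlt
    exact absurd (hy.trans (hmono hlt.le)) (not_le.mpr ha)
  refine ⟨fun hx => ?_, fun hx => csInf_le hbdd hx⟩
  have hright : ∀ y, quantileFn F u < y → u ≤ F y := fun y hy => by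
    obtain ⟨z, hz, hzy⟩ := exists_lt_of_csInf_lt hne hy
    exact le_trans hz (hmono hzy.le)
  have hlim : Tendsto F (nhdsWithin (quantileFn F u) (Ioi (quantileFn F u)))
      (nhds (F (quantileFn F u))) := (hrc _).mono Ioi_subset_Ici_self
  have hatt : u ≤ F (quantileFn F u) :=
    ge_of_tendsto hlim (by filter_upwards [self_mem_nhdsWithin] with y hy using hright y hy)
  exact hatt.trans (hmono hx)

/-- **Proposition 1** (Proposition 2.17 of Santambrogio, 2015).
If `F` and `G` are cumulative distribution functions on `ℝ` (nondecreasing,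
right-continuous, tending to `0` at `-∞` and `1` at `+∞`), then
`∫₀¹ |F⁻¹(u) − G⁻¹(u)| du = ∫_ℝ |F(x) − G(x)| dx` as an equality in `[0,∞]`. -/
theorem stmt_0 (F G : ℝ → ℝ)
    (hFmono : Monotone F) (hGmono : Monotone G)
    (hFrc : ∀ x, ContinuousWithinAt F (Ici x) x)
    (hGrc : ∀ x, ContinuousWithinAt G (Ici x) x)
    (hF0 : Tendsto F atBot (nhds 0)) (hF1 : Tendsto F atTop (nhds 1))
    (hG0 : Tendsto G atBot (nhds 0)) (hG1 : Tendsto G atTop (nhds 1)) :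
    ∫⁻ u in Ioo (0:ℝ) 1, ENNReal.ofReal |quantileFn F u - quantileFn G u| =
      ∫⁻ x : ℝ, ENNReal.ofReal |F x - G x| := by
  set S : Set (ℝ × ℝ) := {p | p.1 ∈ uIoc (F p.2) (G p.2)} with hS
  have hFm : Measurable fun p : ℝ × ℝ => F p.2 := hFmono.measurable.comp measurable_snd
  have hGm : Measurable fun p : ℝ × ℝ => G p.2 := hGmono.measurable.comp measurable_snd
  have hSm : MeasurableSet S := by
    have : S = ({p | F p.2 < p.1} ∩ {p | p.1 ≤ G p.2}) ∪
        ({p | G p.2 < p.1} ∩ {p | p.1 ≤ F p.2}) := by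
      ext p
      simp [hS, mem_uIoc]
    rw [this]
    exact ((measurableSet_lt hFm measurable_fst).inter (measurableSet_le measurable_fst hGm)).union
      ((measurableSet_lt hGm measurable_fst).inter (measurableSet_le measurable_fst hFm))
  have hslice_u : ∀ u ∈ Ioo (0 : ℝ) 1, ENNReal.ofReal |quantileFn F u - quantileFn G u| =
      ∫⁻ x : ℝ, S.indicator 1 (u, x) := by
    intro u hu
    have hset : Prod.mk u ⁻¹' S =
        Ico (min (quantileFn F u) (quantileFn G u)) (max (quantileFn F u) (quantileFn G u)) := by
      ext x
      have h1 := quantileFn_le_iff hFmono hFrc hF0 hF1 hu x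
      have h2 := quantileFn_le_iff hGmono hGrc hG0 hG1 hu x
      simp only [hS, mem_preimage, mem_ofPred_eq, mem_uIoc, mem_Ico, min_le_iff, max_le_iff,
        ← not_le, h1, h2]
      tauto
    have hind : (fun x => S.indicator (1 : ℝ × ℝ → ENNReal) (u, x)) =
        (Prod.mk u ⁻¹' S).indicator 1 := rfl
    rw [hind, lintegral_indicator_one (measurable_prodMk_left hSm), hset, Real.volume_Ico,
      max_sub_min_eq_abs']
  have hslice_x : ∀ x : ℝ, ∫⁻ u in Ioc (0 : ℝ) 1, S.indicator 1 (u, x) =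
      ENNReal.ofReal |F x - G x| := by
    intro x
    have hind : (fun u => S.indicator (1 : ℝ × ℝ → ENNReal) (u, x)) =
        (uIoc (F x) (G x)).indicator 1 := rfl
    have hsub : uIoc (F x) (G x) ⊆ Ioc 0 1 :=
      Ioc_subset_Ioc (le_min (hFmono.le_of_tendsto hF0 x) (hGmono.le_of_tendsto hG0 x))
        (max_le (hFmono.ge_of_tendsto hF1 x) (hGmono.ge_of_tendsto hG1 x))
    rw [hind, lintegral_indicator_one measurableSet_uIoc,
      Measure.restrict_apply measurableSet_uIoc, inter_eq_left.mpr hsub, Real.volume_uIoc,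
      abs_sub_comm]
  rw [setLIntegral_congr_fun measurableSet_Ioo hslice_u,
    lintegral_lintegral_swap (f := fun u x => S.indicator 1 (u, x))
      ((measurable_one.indicator hSm).aemeasurable),
    -- The slice at `x` may contain `u = 1`, so the null endpoint is added to the domain.
    restrict_Ioo_eq_restrict_Ioc]
  exact lintegral_congr hslice_x
end

section
/- Let (X,Z) be a random pair with X taking values in a standard Borel space and Z real-valued, and let S(z|x) = ℙ(Z ≤ z | X = x) be a regular conditional cumulative distribution function of Z given X. If for ℙ_X-almost every x the map z ↦ S(z|x) is continuous, then for every u ∈ [0,1], ℙ(S(Z|X) ≤ u | X = x) = u for ℙ_X-almost every x; in particular the random variable S(Z|X) is uniformly distributed on (0,1) and is independent of X. -/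
open MeasureTheory ProbabilityTheory Set

/-!
This is the conditional probability integral transform. For a probability measure `μ` on `ℝ`
with continuous CDF `F` and `u < 1`, the sublevel set `{F ≤ u}` is a closed lower set bounded
above, hence empty (which forces `u ≤ 0`) or of the form `Iic a` with `F a = u`; thus
`μ {F ≤ u} = u` (`measure_cdf_le`) and `F` pushes `μ` to the uniform law (`map_cdf_eq_uniform`).
Applied to `μ = κ x` for almost every `x`, this shows that `(x, z) ↦ (x, S(z|x))` pushes the joint
law `ℙ_X ⊗ κ` to the product of `ℙ_X` and the uniform law (`map_compProd_eq_prod`), which contains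
both the uniformity and the independence claims.
-/

/-- The truncation `min u 1` makes the formula valid for every real `u`; for `u < 0` both sides
are `0`. -/
lemma measure_cdf_le (μ : Measure ℝ) [IsProbabilityMeasure μ] (F : ℝ → ℝ)
    (hF : ∀ z, F z = (μ (Iic z)).toReal) (hc : Continuous F) (u : ℝ) :
    μ {z | F z ≤ u} = ENNReal.ofReal (min u 1) := by
  have hFc : F = fun z => cdf μ z := by
    ext z
    rw [hF, cdf_eq_real, measureReal_def]
  have hmono : Monotone F := hFc ▸ monotone_cdf μ
  have hbot : Filter.Tendsto F Filter.atBot (nhds 0) := hFc ▸ tendsto_cdf_atBot μ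
  have htop : Filter.Tendsto F Filter.atTop (nhds 1) := hFc ▸ tendsto_cdf_atTop μ
  rcases le_or_gt 1 u with hu | hu
  · have hall : {z | F z ≤ u} = univ :=
      eq_univ_of_forall fun z => (hmono.ge_of_tendsto htop z).trans hu
    simp [hall, hu]
  rw [min_eq_left hu.le]
  rcases eq_empty_or_nonempty {z | F z ≤ u} with he | hne
  · have hgt : ∀ z, u < F z := fun z => by
      by_contra h
      exact (he ▸ (not_lt.1 h : z ∈ {z | F z ≤ u}) : z ∈ (∅ : Set ℝ))
    have hu0 : u ≤ 0 := ge_of_tendsto' hbot fun z => (hgt z).le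
    simp [he, ENNReal.ofReal_of_nonpos hu0]
  · obtain ⟨b, hb⟩ := (htop.eventually (lt_mem_nhds hu)).exists
    have hbdd : BddAbove {z | F z ≤ u} :=
      ⟨b, fun z hz => le_of_lt (hmono.reflect_lt (lt_of_le_of_lt hz hb))⟩
    have hclosed : IsClosed {z | F z ≤ u} := isClosed_le hc continuous_const
    set a := sSup {z | F z ≤ u} with ha
    have haA : F a ≤ u := hclosed.csSup_mem hne hbdd
    have hA : {z | F z ≤ u} = Iic a :=
      Subset.antisymm (fun z hz => le_csSup hbdd hz) fun z hz => (hmono hz).trans haA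
    -- `F > u` strictly to the right of `a`, so right-continuity gives the reverse inequality.
    have hau : u ≤ F a := by
      refine ge_of_tendsto ((hc.tendsto a).mono_left (nhdsWithin_le_nhds (s := Ioi a))) ?_
      filter_upwards [self_mem_nhdsWithin] with z hz
      by_contra h
      exact absurd (le_csSup hbdd (le_of_lt (not_le.1 h) : z ∈ {z | F z ≤ u})) (not_le.2 hz)
    rw [hA, ← le_antisymm haA hau, hF, ENNReal.ofReal_toReal (measure_ne_top _ _)]

lemma map_cdf_eq_uniform (μ : Measure ℝ) [IsProbabilityMeasure μ] (F : ℝ → ℝ)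
    (hF : ∀ z, F z = (μ (Iic z)).toReal) (hc : Continuous F) :
    μ.map F = volume.restrict (Ioo (0:ℝ) 1) := by
  have : IsProbabilityMeasure (μ.map F) := Measure.isProbabilityMeasure_map hc.aemeasurable
  refine Measure.ext_of_Iic _ _ fun u => ?_
  have hset : Iic u ∩ Ioc (0:ℝ) 1 = Ioc 0 (min u 1) := by
    ext z
    simp only [mem_inter_iff, mem_Iic, mem_Ioc, le_min_iff]
    tauto
  rw [Measure.map_apply hc.measurable measurableSet_Iic,
    Measure.restrict_congr_set Ioo_ae_eq_Ioc, Measure.restrict_apply measurableSet_Iic, hset,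
    Real.volume_Ioc, sub_zero]
  exact measure_cdf_le μ F hF hc u

/-- Joint measurability holds because `κ x (Iic z)` is the mass of the section at `(x, z)` of the
measurable set `{((x, z), t) | t ≤ z}`. -/
lemma measurable_condCDF_uncurried {𝒳 : Type*} [MeasurableSpace 𝒳] (κ : Kernel 𝒳 ℝ)
    [IsMarkovKernel κ] : Measurable fun p : 𝒳 × ℝ => (κ p.1 (Iic p.2)).toReal := by
  have hs : MeasurableSet {q : (𝒳 × ℝ) × ℝ | q.2 ≤ q.1.2} :=
    measurableSet_le measurable_snd (measurable_snd.comp measurable_fst)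
  exact (Kernel.measurable_kernel_prodMk_left (κ := κ.prodMkRight ℝ) hs).ennreal_toReal

lemma map_compProd_eq_prod {𝒳 : Type*} [MeasurableSpace 𝒳] (μ : Measure 𝒳)
    [IsProbabilityMeasure μ] (κ : Kernel 𝒳 ℝ) [IsMarkovKernel κ]
    (S : ℝ → 𝒳 → ℝ) (hS : ∀ z x, S z x = (κ x (Iic z)).toReal)
    (hcont : ∀ᵐ x ∂μ, Continuous fun z => S z x) (hm : Measurable fun p : 𝒳 × ℝ => S p.2 p.1) :
    (μ ⊗ₘ κ).map (fun p => (p.1, S p.2 p.1)) = μ.prod (volume.restrict (Ioo (0:ℝ) 1)) := by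
  have hg : Measurable fun p : 𝒳 × ℝ => (p.1, S p.2 p.1) := measurable_fst.prodMk hm
  refine (Measure.prod_eq fun s t hs ht => ?_).symm
  rw [Measure.map_apply hg (hs.prod ht), Measure.compProd_apply (hg (hs.prod ht))]
  have hsec : ∀ᵐ x ∂μ, κ x (Prod.mk x ⁻¹' ((fun p : 𝒳 × ℝ => (p.1, S p.2 p.1)) ⁻¹' s ×ˢ t))
      = s.indicator (fun _ => volume.restrict (Ioo (0:ℝ) 1) t) x := by
    filter_upwards [hcont] with x hx
    by_cases hxs : x ∈ s
    · rw [indicator_of_mem hxs, ← map_cdf_eq_uniform (κ x) _ (fun z => hS z x) hx,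
        Measure.map_apply hx.measurable ht]
      congr 1
      ext z
      simp [hxs]
    · rw [indicator_of_notMem hxs]
      convert measure_empty (μ := κ x)
      ext z
      simp [hxs]
  rw [lintegral_congr_ae hsec, lintegral_indicator_const hs, mul_comm]

/-- Let `(X,Z)` be a random pair with `X` valued in a standard Borel
space and `Z` real-valued, and let `S(z|x) = ℙ(Z ≤ z | X = x)` be a regular conditional
CDF of `Z` given `X` (encoded by a Markov kernel `κ` disintegrating the joint law).
If for `ℙ_X`-a.e. `x` the map `z ↦ S(z|x)` is continuous, then for every `u ∈ [0,1]`,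
`ℙ(S(Z|X) ≤ u | X = x) = u` for `ℙ_X`-a.e. `x`; in particular `S(Z|X)` is uniformly
distributed on `(0,1)` and independent of `X`. -/
theorem stmt_2 {Ω 𝒳 : Type*} [MeasurableSpace Ω] [MeasurableSpace 𝒳] [StandardBorelSpace 𝒳]
    (P : Measure Ω) [IsProbabilityMeasure P]
    (X : Ω → 𝒳) (Z : Ω → ℝ) (hX : Measurable X) (hZ : Measurable Z)
    (κ : Kernel 𝒳 ℝ) [IsMarkovKernel κ]
    (hdisint : P.map (fun ω => (X ω, Z ω)) = (P.map X) ⊗ₘ κ)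
    (S : ℝ → 𝒳 → ℝ) (hS : ∀ z x, S z x = (κ x (Iic z)).toReal)
    (hcont : ∀ᵐ x ∂(P.map X), Continuous fun z => S z x) :
    (∀ u ∈ Icc (0:ℝ) 1, ∀ᵐ x ∂(P.map X), κ x {z : ℝ | S z x ≤ u} = ENNReal.ofReal u) ∧
    P.map (fun ω => S (Z ω) (X ω)) = volume.restrict (Ioo (0:ℝ) 1) ∧
    IndepFun X (fun ω => S (Z ω) (X ω)) P := by
  have hm : Measurable fun p : 𝒳 × ℝ => S p.2 p.1 := by
    simp only [hS]
    exact measurable_condCDF_uncurried κ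
  have : IsProbabilityMeasure (P.map X) := Measure.isProbabilityMeasure_map hX.aemeasurable
  have : IsProbabilityMeasure (volume.restrict (Ioo (0:ℝ) 1)) := ⟨by simp⟩
  have hSm : Measurable fun ω => S (Z ω) (X ω) := hm.comp (hX.prodMk hZ)
  have hjoint : P.map (fun ω => (X ω, S (Z ω) (X ω))) =
      (P.map X).prod (volume.restrict (Ioo (0:ℝ) 1)) := by
    rw [← map_compProd_eq_prod (P.map X) κ S hS hcont hm, ← hdisint,
      Measure.map_map (measurable_fst.prodMk hm) (hX.prodMk hZ)]
    rfl
  have hlaw : P.map (fun ω => S (Z ω) (X ω)) = volume.restrict (Ioo (0:ℝ) 1) := by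
    have h := congrArg Measure.snd hjoint
    rwa [Measure.snd_map_prodMk hX, Measure.snd_prod] at h
  refine ⟨fun u hu => ?_, hlaw, ?_⟩
  · filter_upwards [hcont] with x hx
    rw [measure_cdf_le (κ x) _ (fun z => hS z x) hx u, min_eq_left hu.2]
  · rw [indepFun_iff_map_prod_eq_prod_map_map hX.aemeasurable hSm.aemeasurable, hlaw]
    exact hjoint
end
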